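/- Suppose the discount function satisfies δ(i)δ(j) ≤ δ(i+j) for all i,j ∈ ℕ, f is upper semicontinuous, and the transition kernel Q is lower semicontinuous under the weak star topology, i.e. for every bounded Borel measurable g : 𝕏 → ℝ and every sequence x_n → x in 𝕏, liminf_{n→∞} ∫_𝕏 g(y) Q(x_n, dy) ≥ ∫_𝕏 g(y) Q(x, dy). Then S* := ∩_{S∈ℰ} S is the optimal equilibrium: S* ∈ ℰ and V(x,S*) ≥ V(x,S) for every S ∈ ℰ and every x ∈ 𝕏. -/

import Mathlib

/-!
Call a Borel set `S` *good* if `Θ(S) ⊆ S`, i.e. off `S` continuing until `S` is strictly better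
than stopping. Every equilibrium is good, and it is closed: the value satisfies the one-step
equation `J(x, ρ(x,S)) = ∫ g dQ(x)` with `g` bounded and measurable (`valJ_eq_integral`), so it is
lower semicontinuous in `x`, while `f` is upper semicontinuous (`isClosed_Θ`).

The heart of the matter is `valJ_le_of_refine`: let `U` be contained in all members of a family `𝓢`,
and suppose that at each point of `⋃₀ 𝓢` outside `U` continuing until some `T ∈ 𝓢` is at least as
good as stopping. Then `U` is at least as good as every member of `𝓢`. Along a path, stop on
entering `S` only in `U`; otherwise switch to a suitable `T`, and so on. Decreasing impatience says
that such a switch, profitable at the moment it is made, is profitable as seen from time `0`.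
All intermediate times precede the entrance into `U`, and the `n`-th of them is at least `n`, so
what is not yet accounted for after `n` switches is at most `C δ(n) → 0`. Conditioning on the first
step turns this into an induction on `n` which needs no strong Markov property.

Let `G` be the intersection of all closed good sets. It is closed, hence Borel, with no countability
argument. By the refinement lemma `G` dominates every closed good set, so `G` is good;
applied to the family `{G}` the lemma shows that `Θ(G) ⊆ G` is again closed and good, so `Θ(G) = G`
by minimality. Thus `G` is an equilibrium contained in every equilibrium, i.e. `G = S*`, and it
dominates every equilibrium.

The one-step equation rests on the Markov property at time one (`IsMarkovChainLaw.map_shiftPath`),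
which follows since a Markov measure on path space is determined by its initial law and its
transition kernel (`HasMarkovProperty.ext`).
-/


open MeasureTheory ProbabilityTheory Set Filter Topology
open scoped ENNReal ENat

noncomputable section

/-- The σ-algebra generated by the first `n+1` coordinates of the path space:
the natural filtration of the coordinate process at time `n`. -/
def pathSigma (𝕏 : Type*) [m : MeasurableSpace 𝕏] (n : ℕ) : MeasurableSpace (ℕ → 𝕏) :=
  ⨆ i ∈ Finset.range (n + 1), MeasurableSpace.comap (fun ω : ℕ → 𝕏 => ω i) m

/-- `Pr` is the family of laws of the time-homogeneous Markov chain with one-step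
transition kernel `Q`: under `Pr x` the chain starts at `x`, and the Markov property
`Pr^x(X_{n+1} ∈ A | 𝓕_n) = Q(X_n, A)` holds. -/
structure IsMarkovChainLaw {𝕏 : Type*} [MeasurableSpace 𝕏]
    (Pr : Kernel 𝕏 (ℕ → 𝕏)) (Q : Kernel 𝕏 𝕏) : Prop where
  start : ∀ x : 𝕏, Pr x {ω | ω 0 = x} = 1
  markov : ∀ (x : 𝕏) (n : ℕ) (B : Set (ℕ → 𝕏)), MeasurableSet[pathSigma 𝕏 n] B →
    ∀ A : Set 𝕏, MeasurableSet A →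
      Pr x (B ∩ {ω | ω (n + 1) ∈ A}) = ∫⁻ ω in B, Q (ω n) A ∂(Pr x)

/-- The first hitting time `ρ(x,S) = inf {t ≥ 1 : X_t ∈ S}` along the path `ω`
(equal to `⊤` if `S` is never reached at a time `≥ 1`). -/
def hitTime {𝕏 : Type*} (S : Set 𝕏) (ω : ℕ → 𝕏) : ℕ∞ :=
  sInf {n : ℕ∞ | ∃ t : ℕ, n = (t : ℕ∞) ∧ 1 ≤ t ∧ ω t ∈ S}

/-- The discounted payoff `δ(ρ(x,S)) f(X_{ρ(x,S)})` collected along the path `ω`,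
with the convention that it vanishes when `S` is never hit. -/
def stopPayoff {𝕏 : Type*} (δ : ℕ → ℝ) (f : 𝕏 → ℝ) (S : Set 𝕏) (ω : ℕ → 𝕏) : ℝ :=
  if hitTime S ω = ⊤ then 0
  else δ (hitTime S ω).toNat * f (ω (hitTime S ω).toNat)

/-- The objective value `J(x, ρ(x,S)) = 𝔼^x[δ(ρ(x,S)) f(X_{ρ(x,S)})]`. -/
def valJ {𝕏 : Type*} [MeasurableSpace 𝕏] (Pr : Kernel 𝕏 (ℕ → 𝕏)) (δ : ℕ → ℝ) (f : 𝕏 → ℝ)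
    (S : Set 𝕏) (x : 𝕏) : ℝ :=
  ∫ ω, stopPayoff δ f S ω ∂(Pr x)

/-- The operator `Θ(S) = {x ∈ 𝕏 : f(x) ≥ J(x, ρ(x,S))}`. -/
def Θ {𝕏 : Type*} [MeasurableSpace 𝕏] (Pr : Kernel 𝕏 (ℕ → 𝕏)) (δ : ℕ → ℝ) (f : 𝕏 → ℝ)
    (S : Set 𝕏) : Set 𝕏 :=
  {x | valJ Pr δ f S x ≤ f x}

/-- A Borel set `S ⊆ 𝕏` is an equilibrium if `Θ(S) = S`. -/
def IsEquilibrium {𝕏 : Type*} [MeasurableSpace 𝕏] (Pr : Kernel 𝕏 (ℕ → 𝕏)) (δ : ℕ → ℝ)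
    (f : 𝕏 → ℝ) (S : Set 𝕏) : Prop :=
  MeasurableSet S ∧ Θ Pr δ f S = S

/-- The value `V(x,S) = max (f x) (J(x, ρ(x,S)))` associated with an equilibrium `S`. -/
def valV {𝕏 : Type*} [MeasurableSpace 𝕏] (Pr : Kernel 𝕏 (ℕ → 𝕏)) (δ : ℕ → ℝ) (f : 𝕏 → ℝ)
    (S : Set 𝕏) (x : 𝕏) : ℝ :=
  max (f x) (valJ Pr δ f S x)

/-! ### Hitting times and payoffs along a path -/

/-- The shifted path `(X_1, X_2, …)`. -/
def shiftPath {𝕏 : Type*} (ω : ℕ → 𝕏) : ℕ → 𝕏 := fun n => ω (n + 1)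

section HittingTime

variable {𝕏 : Type*} {S : Set 𝕏} {ω : ℕ → 𝕏}

lemma hitTime_eq_coe_iff {t : ℕ} :
    hitTime S ω = t ↔ 1 ≤ t ∧ ω t ∈ S ∧ ∀ s, 1 ≤ s → s < t → ω s ∉ S := by
  constructor
  · intro h
    have hne : {n : ℕ∞ | ∃ t : ℕ, n = (t : ℕ∞) ∧ 1 ≤ t ∧ ω t ∈ S}.Nonempty := by
      by_contra hne
      rw [Set.not_nonempty_iff_eq_empty] at hne
      rw [hitTime, hne, sInf_empty] at h
      exact ENat.top_ne_natCast t h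
    obtain ⟨u, hu, h1, h2⟩ := csInf_mem hne
    have hut : u = t := by
      have : (u : ℕ∞) = t := hu.symm.trans h
      exact_mod_cast this
    subst hut
    refine ⟨h1, h2, fun s hs hst hsS => ?_⟩
    have : hitTime S ω ≤ (s : ℕ∞) := sInf_le ⟨s, rfl, hs, hsS⟩
    rw [h] at this
    have : u ≤ s := by exact_mod_cast this
    omega
  · rintro ⟨h1, h2, h3⟩
    apply le_antisymm
    · exact sInf_le ⟨t, rfl, h1, h2⟩
    · refine le_sInf ?_
      rintro _ ⟨s, rfl, hs, hsS⟩
      have : t ≤ s := by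
        by_contra hlt
        exact h3 s hs (by omega) hsS
      exact_mod_cast this

lemma hitTime_eq_top_iff : hitTime S ω = ⊤ ↔ ∀ t, 1 ≤ t → ω t ∉ S := by
  rw [hitTime, sInf_eq_top]
  constructor
  · intro h t ht hS
    exact ENat.natCast_ne_top t (h _ ⟨t, rfl, ht, hS⟩)
  · rintro h _ ⟨t, rfl, ht, hS⟩
    exact absurd hS (h t ht)

lemma hitTime_of_mem (h : ω 1 ∈ S) : hitTime S ω = (1 : ℕ) :=
  hitTime_eq_coe_iff.2 ⟨le_rfl, h, fun s h1 h2 => by omega⟩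

lemma hitTime_of_notMem (h : ω 1 ∉ S) : hitTime S ω = hitTime S (shiftPath ω) + 1 := by
  rcases eq_or_ne (hitTime S (shiftPath ω)) ⊤ with h' | h'
  · rw [h', top_add, hitTime_eq_top_iff]
    intro t ht
    obtain rfl | ht1 := eq_or_ne t 1
    · exact h
    · obtain ⟨u, rfl⟩ : ∃ u, t = u + 1 := ⟨t - 1, by omega⟩
      exact hitTime_eq_top_iff.1 h' u (by omega)
  · obtain ⟨t, ht⟩ := ENat.ne_top_iff_exists.1 h'
    obtain ⟨h1, h2, h3⟩ := hitTime_eq_coe_iff.1 ht.symm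
    rw [← ht, ← Nat.cast_one, ← Nat.cast_add, hitTime_eq_coe_iff]
    refine ⟨by omega, h2, fun s hs hst => ?_⟩
    obtain rfl | hs1 := eq_or_ne s 1
    · exact h
    · obtain ⟨u, rfl⟩ : ∃ u, s = u + 1 := ⟨s - 1, by omega⟩
      exact h3 u (by omega) (by omega)

lemma measurable_hitTime [MeasurableSpace 𝕏] (hS : MeasurableSet S) :
    Measurable (hitTime S : (ℕ → 𝕏) → ℕ∞) := by
  have hev : ∀ t : ℕ, MeasurableSet {ω : ℕ → 𝕏 | ω t ∈ S} := fun t => measurable_pi_apply t hS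
  refine measurable_to_countable' fun y => ?_
  induction y using ENat.recTopCoe with
  | top =>
    have : hitTime S ⁻¹' {⊤} = {ω : ℕ → 𝕏 | ∀ t, 1 ≤ t → ω t ∉ S} := by
      ext ω; exact hitTime_eq_top_iff
    rw [this]
    simp only [Set.ofPred_forall]
    exact .iInter fun t => .iInter fun _ => (hev t).compl
  | coe n =>
    have : hitTime S ⁻¹' {(n : ℕ∞)} =
        {ω : ℕ → 𝕏 | 1 ≤ n ∧ ω n ∈ S ∧ ∀ s, 1 ≤ s → s < n → ω s ∉ S} := by
      ext ω; exact hitTime_eq_coe_iff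
    rw [this]
    simp only [Set.ofPred_and, Set.ofPred_forall]
    exact (MeasurableSet.const _).inter
      ((hev n).inter (.iInter fun t => .iInter fun _ => .iInter fun _ => (hev t).compl))

lemma measurable_stopPayoff [MeasurableSpace 𝕏] (hS : MeasurableSet S) (δ : ℕ → ℝ) {f : 𝕏 → ℝ}
    (hf : Measurable f) : Measurable (stopPayoff δ f S) := by
  have h : Measurable fun p : ℕ∞ × (ℕ → 𝕏) =>
      if p.1 = ⊤ then 0 else δ p.1.toNat * f (p.2 p.1.toNat) := by
    refine measurable_from_prod_countable_right fun n => ?_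
    dsimp only
    split_ifs
    · exact measurable_const
    · exact (hf.comp (measurable_pi_apply _)).const_mul _
  exact h.comp ((measurable_hitTime hS).prodMk measurable_id)

lemma stopPayoff_nonneg {δ : ℕ → ℝ} {f : 𝕏 → ℝ} (hδ : ∀ n, 0 ≤ δ n) (hf : ∀ x, 0 ≤ f x) :
    0 ≤ stopPayoff δ f S ω := by
  rw [stopPayoff]
  split_ifs
  · exact le_rfl
  · exact mul_nonneg (hδ _) (hf _)

lemma stopPayoff_le {δ : ℕ → ℝ} {f : 𝕏 → ℝ} {C d : ℝ} (hδ : ∀ n, 0 ≤ δ n) (hδd : ∀ n, δ n ≤ d)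
    (hf : ∀ x, 0 ≤ f x) (hfC : ∀ x, f x ≤ C) : stopPayoff δ f S ω ≤ d * C := by
  have hd : 0 ≤ d := (hδ 0).trans (hδd 0)
  have hC : 0 ≤ C := (hf (ω 0)).trans (hfC _)
  rw [stopPayoff]
  split_ifs
  · positivity
  · exact mul_le_mul (hδd _) (hfC _) (hf _) hd

lemma stopPayoff_eq (δ : ℕ → ℝ) (f : 𝕏 → ℝ) [Decidable (ω 1 ∈ S)] :
    stopPayoff δ f S ω =
      if ω 1 ∈ S then δ 1 * f (ω 1) else stopPayoff (fun n => δ (n + 1)) f S (shiftPath ω) := by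
  split_ifs with h
  · have := hitTime_of_mem h
    simp [stopPayoff, this]
  · rw [stopPayoff, hitTime_of_notMem h, stopPayoff]
    induction hitTime S (shiftPath ω) using ENat.recTopCoe with
    | top => simp
    | coe n =>
      have : ((n : ℕ∞) + 1) = ((n + 1 : ℕ) : ℕ∞) := by push_cast; rfl
      simp [this, shiftPath, -Nat.cast_add]

end HittingTime

/-! ### The Markov property at time one -/

section MarkovProperty

variable {𝕏 : Type*} [MeasurableSpace 𝕏]

lemma pathSigma_le (n : ℕ) : pathSigma 𝕏 n ≤ MeasurableSpace.pi :=
  iSup₂_le fun i _ => (measurable_pi_apply i).comap_le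

lemma pathSigma_zero :
    pathSigma 𝕏 0 = MeasurableSpace.comap (fun ω : ℕ → 𝕏 => ω 0) inferInstance := by
  simp [pathSigma]

lemma pathSigma_succ (n : ℕ) :
    pathSigma 𝕏 (n + 1) =
      pathSigma 𝕏 n ⊔ MeasurableSpace.comap (fun ω : ℕ → 𝕏 => ω (n + 1)) inferInstance := by
  rw [pathSigma, Finset.range_add_one, Finset.iSup_insert, sup_comm, pathSigma]

lemma pathSigma_mono : Monotone (pathSigma 𝕏) :=
  monotone_nat_of_le_succ fun n => by rw [pathSigma_succ]; exact le_sup_left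

lemma measurable_eval_pathSigma {i n : ℕ} (h : i ≤ n) :
    Measurable[pathSigma 𝕏 n] (fun ω : ℕ → 𝕏 => ω i) := by
  rw [measurable_iff_comap_le]
  exact le_iSup₂_of_le (f := fun i (_ : i ∈ Finset.range (n + 1)) =>
    MeasurableSpace.comap (fun ω : ℕ → 𝕏 => ω i) _) i (Finset.mem_range.2 (by omega)) le_rfl

lemma iSup_pathSigma : ⨆ n, pathSigma 𝕏 n = MeasurableSpace.pi :=
  le_antisymm (iSup_le pathSigma_le) <| iSup_le fun i =>
    (measurable_iff_comap_le.1 (measurable_eval_pathSigma le_rfl)).trans (le_iSup (pathSigma 𝕏) i)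

/-- The one-step Markov property with transition kernel `Q` of a measure on path space. -/
def HasMarkovProperty (Q : Kernel 𝕏 𝕏) (μ : Measure (ℕ → 𝕏)) : Prop :=
  ∀ (n : ℕ) (B : Set (ℕ → 𝕏)), MeasurableSet[pathSigma 𝕏 n] B →
    ∀ A : Set 𝕏, MeasurableSet A → μ (B ∩ {ω | ω (n + 1) ∈ A}) = ∫⁻ ω in B, Q (ω n) A ∂μ

/-- A Markov measure on path space is determined by its initial law and transition kernel. -/
lemma HasMarkovProperty.ext {Q : Kernel 𝕏 𝕏} {μ ν : Measure (ℕ → 𝕏)} [IsProbabilityMeasure μ]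
    [IsProbabilityMeasure ν] (hμ : HasMarkovProperty Q μ) (hν : HasMarkovProperty Q ν)
    (h0 : ∀ A : Set 𝕏, MeasurableSet A → μ {ω | ω 0 ∈ A} = ν {ω | ω 0 ∈ A}) : μ = ν := by
  have key : ∀ n, ∀ B : Set (ℕ → 𝕏), MeasurableSet[pathSigma 𝕏 n] B → μ B = ν B := by
    intro n
    induction n with
    | zero =>
      rw [pathSigma_zero]
      rintro _ ⟨A, hA, rfl⟩
      exact h0 A hA
    | succ n ih =>
      have htrim : μ.trim (pathSigma_le n) = ν.trim (pathSigma_le n) := by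
        refine @Measure.ext _ (pathSigma 𝕏 n) _ _ fun B hB => ?_
        rw [trim_measurableSet_eq _ hB, trim_measurableSet_eq _ hB, ih B hB]
      -- the integrand `Q (ω n) A` is measurable with respect to the first `n + 1` coordinates
      have hinter : ∀ B : Set (ℕ → 𝕏), MeasurableSet[pathSigma 𝕏 n] B → ∀ A : Set 𝕏,
          MeasurableSet A → μ (B ∩ {ω | ω (n + 1) ∈ A}) = ν (B ∩ {ω | ω (n + 1) ∈ A}) := by
        intro B hB A hA
        have hm : Measurable[pathSigma 𝕏 n] (B.indicator fun ω => Q (ω n) A) :=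
          ((Q.measurable_coe hA).comp (measurable_eval_pathSigma le_rfl)).indicator hB
        rw [hμ n B hB A hA, hν n B hB A hA, ← lintegral_indicator (pathSigma_le n B hB),
          ← lintegral_indicator (pathSigma_le n B hB), ← lintegral_trim (pathSigma_le n) hm,
          ← lintegral_trim (pathSigma_le n) hm, htrim]
      intro B hB
      refine MeasurableSpace.induction_on_inter (m := pathSigma 𝕏 (n + 1))
        (C := fun B _ => μ B = ν B)
        (s := Set.image2 (fun B A => B ∩ {ω | ω (n + 1) ∈ A})
          {B | MeasurableSet[pathSigma 𝕏 n] B} {A : Set 𝕏 | MeasurableSet A})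
        ?_ ?_ (by simp) ?_ ?_ ?_ B hB
      · apply le_antisymm
        · rw [pathSigma_succ]
          refine sup_le ?_ ?_
          · intro B hB
            exact MeasurableSpace.measurableSet_generateFrom
              ⟨B, hB, Set.univ, MeasurableSet.univ, by simp⟩
          · rintro _ ⟨A, hA, rfl⟩
            exact MeasurableSpace.measurableSet_generateFrom
              ⟨Set.univ, @MeasurableSet.univ _ (pathSigma 𝕏 n), A, hA, by simp; rfl⟩
        · refine MeasurableSpace.generateFrom_le ?_
          rintro _ ⟨B, hB, A, hA, rfl⟩
          exact @MeasurableSet.inter _ (pathSigma 𝕏 (n + 1)) _ _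
            (pathSigma_mono n.le_succ B hB) (measurable_eval_pathSigma le_rfl hA)
      · rintro _ ⟨B, hB, A, hA, rfl⟩ _ ⟨B', hB', A', hA', rfl⟩ -
        refine ⟨B ∩ B', @MeasurableSet.inter _ (pathSigma 𝕏 n) _ _ hB hB', A ∩ A', hA.inter hA', ?_⟩
        ext ω
        simp only [Set.mem_inter_iff, Set.mem_ofPred_eq]
        tauto
      · rintro _ ⟨B, hB, A, hA, rfl⟩
        exact hinter B hB A hA
      · intro t ht h
        have ht' := pathSigma_le _ t ht
        rw [prob_compl_eq_one_sub ht', prob_compl_eq_one_sub ht', h]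
      · intro g hd hg h
        rw [measure_iUnion hd fun i => pathSigma_le _ _ (hg i),
          measure_iUnion hd fun i => pathSigma_le _ _ (hg i)]
        exact tsum_congr h
  refine ext_of_generate_finite (⋃ n, {B | MeasurableSet[pathSigma 𝕏 n] B}) ?_ ?_ ?_ (by simp)
  · exact iSup_pathSigma.symm.trans
      (MeasurableSpace.generateFrom_iUnion_measurableSet (pathSigma 𝕏)).symm
  · exact isPiSystem_iUnion_of_monotone _
      (fun n => @MeasurableSpace.isPiSystem_measurableSet _ (pathSigma 𝕏 n))
      fun m n hmn B hB => pathSigma_mono hmn B hB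
  · intro B hB
    obtain ⟨n, hn⟩ := Set.mem_iUnion.1 hB
    exact key n B hn

lemma measurable_shiftPath : Measurable (shiftPath : (ℕ → 𝕏) → ℕ → 𝕏) :=
  measurable_pi_lambda _ fun n => measurable_pi_apply (n + 1)

lemma measurable_shiftPath_pathSigma (n : ℕ) :
    Measurable[pathSigma 𝕏 (n + 1), pathSigma 𝕏 n] (shiftPath : (ℕ → 𝕏) → ℕ → 𝕏) := by
  rw [measurable_iff_comap_le, pathSigma, MeasurableSpace.comap_iSup]
  refine iSup_le fun i => ?_
  rw [MeasurableSpace.comap_iSup]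
  refine iSup_le fun hi => ?_
  rw [MeasurableSpace.comap_comp]
  rw [Finset.mem_range] at hi
  exact measurable_iff_comap_le.1 (measurable_eval_pathSigma (i := i + 1) (by omega))

variable [MeasurableSingletonClass 𝕏] {Pr : Kernel 𝕏 (ℕ → 𝕏)} [IsMarkovKernel Pr] {Q : Kernel 𝕏 𝕏}
  [IsMarkovKernel Q]

omit [IsMarkovKernel Q] in
lemma IsMarkovChainLaw.ae_start (h : IsMarkovChainLaw Pr Q) (x : 𝕏) :
    ∀ᵐ ω ∂(Pr x), ω 0 = x := by
  have hm : MeasurableSet {ω : ℕ → 𝕏 | ω 0 = x} :=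
    (measurable_pi_apply (X := fun _ : ℕ => 𝕏) 0) (measurableSet_singleton x)
  exact (prob_compl_eq_zero_iff hm).2 (h.start x)

/-- The Markov property at time one: under `Pr x` the shifted path is the chain started from
the law `Q x`. -/
lemma IsMarkovChainLaw.map_shiftPath (h : IsMarkovChainLaw Pr Q) (x : 𝕏) :
    (Pr x).map shiftPath = (Pr ∘ₖ Q) x := by
  have hms := measurable_shiftPath (𝕏 := 𝕏)
  have : IsProbabilityMeasure ((Pr x).map shiftPath) :=
    Measure.isProbabilityMeasure_map hms.aemeasurable
  refine HasMarkovProperty.ext (Q := Q) ?_ ?_ ?_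
  · intro n B hB A hA
    have hev : MeasurableSet {ω : ℕ → 𝕏 | ω (n + 1) ∈ A} := measurable_pi_apply (n + 1) hA
    have hB' := pathSigma_le n B hB
    have hm : Measurable fun ω : ℕ → 𝕏 => Q (ω n) A :=
      (Q.measurable_coe hA).comp (measurable_pi_apply n)
    rw [Measure.map_apply hms (hB'.inter hev), setLIntegral_map hB' hm hms]
    exact h.markov x (n + 1) _ (measurable_shiftPath_pathSigma n hB) A hA
  · intro n B hB A hA
    have hev : MeasurableSet {ω : ℕ → 𝕏 | ω (n + 1) ∈ A} := measurable_pi_apply (n + 1) hA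
    have hB' := pathSigma_le n B hB
    have hm : Measurable fun ω : ℕ → 𝕏 => Q (ω n) A :=
      (Q.measurable_coe hA).comp (measurable_pi_apply n)
    rw [Kernel.comp_apply' _ _ _ (hB'.inter hev), ← lintegral_indicator hB',
      Kernel.lintegral_comp _ _ _ (hm.indicator hB')]
    refine lintegral_congr fun y => ?_
    rw [h.markov y n B hB A hA, lintegral_indicator hB']
  · intro A hA
    have hev : ∀ i, MeasurableSet {ω : ℕ → 𝕏 | ω i ∈ A} := fun i => measurable_pi_apply i hA
    rw [Measure.map_apply hms (hev 0), Kernel.comp_apply' _ _ _ (hev 0)]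
    have h1 := h.markov x 0 Set.univ (@MeasurableSet.univ _ (pathSigma 𝕏 0)) A hA
    rw [Set.univ_inter, Measure.restrict_univ] at h1
    have h2 : ∀ y, Pr y {ω | ω 0 ∈ A} = A.indicator 1 y := by
      intro y
      by_cases hy : y ∈ A
      · rw [Set.indicator_of_mem hy, Pi.one_apply, ← prob_compl_eq_zero_iff (hev 0)]
        refine measure_eq_zero_iff_ae_notMem.2 ?_
        filter_upwards [h.ae_start y] with ω hω
        simpa [hω] using hy
      · rw [Set.indicator_of_notMem hy]
        refine measure_eq_zero_iff_ae_notMem.2 ?_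
        filter_upwards [h.ae_start y] with ω hω
        simpa [hω] using hy
    simp_rw [h2]
    rw [lintegral_indicator_one hA]
    refine h1.trans ?_
    have h3 : ∀ᵐ ω ∂(Pr x), Q (ω 0) A = Q x A := by
      filter_upwards [h.ae_start x] with ω hω
      rw [hω]
    rw [lintegral_congr_ae h3]
    simp

end MarkovProperty

/-! ### Values of stopping regions -/

section Values

variable {𝕏 : Type*} [MeasurableSpace 𝕏] {Pr : Kernel 𝕏 (ℕ → 𝕏)} [IsMarkovKernel Pr]
  {Q : Kernel 𝕏 𝕏} [IsMarkovKernel Q] {f : 𝕏 → ℝ} {C d : ℝ} {δ : ℕ → ℝ} {S U : Set 𝕏}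

lemma integrable_stopPayoff (hS : MeasurableSet S) (hf : Measurable f) (hf0 : ∀ x, 0 ≤ f x)
    (hfC : ∀ x, f x ≤ C) (hδ : ∀ n, 0 ≤ δ n) (hδd : ∀ n, δ n ≤ d) (μ : Measure (ℕ → 𝕏))
    [IsFiniteMeasure μ] : Integrable (stopPayoff δ f S) μ :=
  .of_bound (measurable_stopPayoff hS δ hf).aestronglyMeasurable (d * C) <| .of_forall fun ω => by
    rw [Real.norm_of_nonneg (stopPayoff_nonneg hδ hf0)]
    exact stopPayoff_le hδ hδd hf0 hfC

omit [IsMarkovKernel Pr] in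
lemma valJ_nonneg (hf0 : ∀ x, 0 ≤ f x) (hδ : ∀ n, 0 ≤ δ n) (x : 𝕏) : 0 ≤ valJ Pr δ f S x :=
  integral_nonneg fun _ => stopPayoff_nonneg hδ hf0

lemma valJ_le (hS : MeasurableSet S) (hf : Measurable f) (hf0 : ∀ x, 0 ≤ f x)
    (hfC : ∀ x, f x ≤ C) (hδ : ∀ n, 0 ≤ δ n) (hδd : ∀ n, δ n ≤ d) (x : 𝕏) :
    valJ Pr δ f S x ≤ d * C := by
  have h := integral_mono (integrable_stopPayoff hS hf hf0 hfC hδ hδd (Pr x))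
    (integrable_const (d * C)) fun ω => stopPayoff_le hδ hδd hf0 hfC
  simpa [valJ] using h

omit [IsMarkovKernel Pr] in
lemma measurable_valJ (hS : MeasurableSet S) (hf : Measurable f) : Measurable (valJ Pr δ f S) :=
  (measurable_stopPayoff hS δ hf).stronglyMeasurable.integral_kernel.measurable

open Classical in
/-- The integrand of the one-step equation `valJ_eq_integral`: the payoff as seen from the state
`y` reached at time one, namely `δ 1 * f y` on `S` and the value of continuing off `S`. -/
def nextValue (Pr : Kernel 𝕏 (ℕ → 𝕏)) (δ : ℕ → ℝ) (f : 𝕏 → ℝ) (S : Set 𝕏) (y : 𝕏) : ℝ :=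
  if y ∈ S then δ 1 * f y else valJ Pr (fun n => δ (n + 1)) f S y

omit [IsMarkovKernel Pr] in
lemma measurable_nextValue (hS : MeasurableSet S) (hf : Measurable f) :
    Measurable (nextValue Pr δ f S) :=
  Measurable.ite hS (hf.const_mul _) (measurable_valJ hS hf)

lemma abs_nextValue_le (hS : MeasurableSet S) (hf : Measurable f) (hf0 : ∀ x, 0 ≤ f x)
    (hfC : ∀ x, f x ≤ C) (hδ : ∀ n, 0 ≤ δ n) (hδd : ∀ n, δ n ≤ d) (y : 𝕏) :
    |nextValue Pr δ f S y| ≤ d * C := by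
  rw [nextValue]
  split_ifs
  · rw [abs_of_nonneg (mul_nonneg (hδ _) (hf0 _))]
    exact mul_le_mul (hδd _) (hfC _) (hf0 _) ((hδ 0).trans (hδd 0))
  · rw [abs_of_nonneg (valJ_nonneg hf0 (fun _ => hδ _) _)]
    exact valJ_le hS hf hf0 hfC (fun _ => hδ _) (fun _ => hδd _) y

lemma integrable_nextValue (hS : MeasurableSet S) (hf : Measurable f) (hf0 : ∀ x, 0 ≤ f x)
    (hfC : ∀ x, f x ≤ C) (hδ : ∀ n, 0 ≤ δ n) (hδd : ∀ n, δ n ≤ d) (x : 𝕏) :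
    Integrable (nextValue Pr δ f S) (Q x) :=
  .of_bound (measurable_nextValue hS hf).aestronglyMeasurable (d * C) <|
    .of_forall (abs_nextValue_le hS hf hf0 hfC hδ hδd)

/-- One-step equation for the value of stopping upon entering `S`, for an arbitrary discount
sequence; continuing for one step shifts the discount sequence. -/
lemma valJ_eq_integral [MeasurableSingletonClass 𝕏] (h : IsMarkovChainLaw Pr Q)
    (hS : MeasurableSet S) (hf : Measurable f)
    (hf0 : ∀ x, 0 ≤ f x) (hfC : ∀ x, f x ≤ C) (hδ : ∀ n, 0 ≤ δ n) (hδd : ∀ n, δ n ≤ d) (x : 𝕏) :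
    valJ Pr δ f S x = ∫ y, nextValue Pr δ f S y ∂(Q x) := by
  classical
  let G : (ℕ → 𝕏) → ℝ := fun ω =>
    if ω 0 ∈ S then δ 1 * f (ω 0) else stopPayoff (fun n => δ (n + 1)) f S ω
  have hGm : Measurable G := Measurable.ite (measurable_pi_apply 0 hS)
    ((hf.comp (measurable_pi_apply 0)).const_mul _) (measurable_stopPayoff hS _ hf)
  have hGb : ∀ ω, ‖G ω‖ ≤ d * C := by
    intro ω
    dsimp only [G]
    split_ifs
    · rw [Real.norm_of_nonneg (mul_nonneg (hδ _) (hf0 _))]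
      exact mul_le_mul (hδd _) (hfC _) (hf0 _) ((hδ 0).trans (hδd 0))
    · rw [Real.norm_of_nonneg (stopPayoff_nonneg (fun _ => hδ _) hf0)]
      exact stopPayoff_le (fun _ => hδ _) (fun _ => hδd _) hf0 hfC
  have h1 : valJ Pr δ f S x = ∫ ω, G ω ∂((Pr x).map shiftPath) := by
    rw [integral_map measurable_shiftPath.aemeasurable hGm.aestronglyMeasurable]
    exact integral_congr_ae (.of_forall fun ω => stopPayoff_eq δ f)
  rw [h1, h.map_shiftPath, Kernel.integral_comp
    (.of_bound hGm.aestronglyMeasurable (d * C) (.of_forall hGb))]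
  refine integral_congr_ae (.of_forall fun y => ?_)
  dsimp only
  rw [nextValue]
  split_ifs with hy
  · have : ∀ᵐ ω ∂(Pr y), G ω = δ 1 * f y := by
      filter_upwards [h.ae_start y] with ω hω
      simp only [G, hω, if_pos hy]
    rw [integral_congr_ae this]
    simp
  · refine integral_congr_ae ?_
    filter_upwards [h.ae_start y] with ω hω
    simp only [G, hω, if_neg hy]

/-- Shrinking the stopping region pays off: if at every point of `⋃₀ 𝓢` outside `U` some `T ∈ 𝓢`
makes continuing at least as good as stopping, then `U` is at least as good as every member of
`𝓢`. Each refusal to stop costs a unit of time, so the loss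
after `n` refusals is at most `C * δ (k + n)`, and the induction is on `n`. The statement involves
all the shifted discount sequences `δ (k + ·)`; decreasing impatience carries a preference for
continuing at time `0` over to every later time. -/
lemma valJ_le_of_refine [MeasurableSingletonClass 𝕏] (h : IsMarkovChainLaw Pr Q)
    (hf : Measurable f) (hf0 : ∀ x, 0 ≤ f x) (hfC : ∀ x, f x ≤ C) (hδ : ∀ n, 0 ≤ δ n)
    (hδ_anti : Antitone δ) (hδ_lim : Tendsto δ atTop (𝓝 0))
    (hDI : ∀ i j : ℕ, δ i * δ j ≤ δ (i + j)) {𝓢 : Set (Set 𝕏)} (h𝓢 : ∀ S ∈ 𝓢, MeasurableSet S)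
    (hU : MeasurableSet U) (hUS : ∀ S ∈ 𝓢, U ⊆ S)
    (hcont : ∀ S ∈ 𝓢, ∀ y ∈ S, y ∉ U → ∃ T ∈ 𝓢, f y ≤ valJ Pr δ f T y)
    (hS : S ∈ 𝓢) (x : 𝕏) : valJ Pr δ f S x ≤ valJ Pr δ f U x := by
  have hC : 0 ≤ C := (hf0 x).trans (hfC x)
  have hδk : ∀ k n, 0 ≤ δ (k + n) := fun k n => hδ _
  have hδkd : ∀ k n, δ (k + n) ≤ δ k := fun k n => hδ_anti (Nat.le_add_right _ _)
  have hshift : ∀ k, (fun n => δ (k + (n + 1))) = fun n => δ (k + 1 + n) := by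
    intro k; funext n; congr 1; ring
  have hDIJ : ∀ k T, T ∈ 𝓢 → ∀ y, δ k * valJ Pr δ f T y ≤ valJ Pr (fun n => δ (k + n)) f T y := by
    intro k T hT y
    rw [valJ, valJ, ← integral_const_mul]
    refine integral_mono ((integrable_stopPayoff (h𝓢 T hT) hf hf0 hfC hδ
      (fun n => hδ_anti n.zero_le) _).const_mul _)
      (integrable_stopPayoff (h𝓢 T hT) hf hf0 hfC (hδk k) (hδkd k) _) fun ω => ?_
    simp only [stopPayoff]
    split_ifs
    · simp
    · rw [← mul_assoc]
      exact mul_le_mul_of_nonneg_right (hDI _ _) (hf0 _)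
  have key : ∀ n k, ∀ S ∈ 𝓢, ∀ x, valJ Pr (fun i => δ (k + i)) f S x ≤
      valJ Pr (fun i => δ (k + i)) f U x + δ (k + n) * C := by
    intro n
    induction n with
    | zero =>
      intro k S hS x
      have h1 := valJ_le (Pr := Pr) (h𝓢 S hS) hf hf0 hfC (hδk k) (hδkd k) x
      have h2 := valJ_nonneg (Pr := Pr) (S := U) hf0 (hδk k) x
      rw [add_zero]
      linarith
    | succ n ih =>
      intro k S hS x
      rw [valJ_eq_integral h (h𝓢 S hS) hf hf0 hfC (hδk k) (hδkd k),
        valJ_eq_integral h hU hf hf0 hfC (hδk k) (hδkd k)]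
      have hiS := integrable_nextValue (Pr := Pr) (Q := Q) (h𝓢 S hS) hf hf0 hfC (hδk k) (hδkd k) x
      have hiU := integrable_nextValue (Pr := Pr) (Q := Q) hU hf hf0 hfC (hδk k) (hδkd k) x
      have hconst : ∫ _, δ (k + (n + 1)) * C ∂(Q x) = δ (k + (n + 1)) * C := by simp
      rw [← hconst, ← integral_add hiU (integrable_const _)]
      refine integral_mono hiS (hiU.add (integrable_const _)) fun y => ?_
      have hpos : 0 ≤ δ (k + (n + 1)) * C := mul_nonneg (hδ _) hC
      have hkn : k + (n + 1) = k + 1 + n := by ring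
      dsimp only [Pi.add_apply, nextValue]
      rw [hkn] at hpos
      rw [hshift, hkn]
      by_cases hyU : y ∈ U
      · rw [if_pos hyU, if_pos (hUS S hS hyU)]
        linarith
      rw [if_neg hyU]
      by_cases hyS : y ∈ S
      · rw [if_pos hyS]
        obtain ⟨T, hT, hfT⟩ := hcont S hS y hyS hyU
        calc δ (k + 1) * f y ≤ δ (k + 1) * valJ Pr δ f T y :=
              mul_le_mul_of_nonneg_left hfT (hδ _)
          _ ≤ valJ Pr (fun n => δ (k + 1 + n)) f T y := hDIJ _ T hT y
          _ ≤ _ := ih (k + 1) T hT y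
      · rw [if_neg hyS]
        exact ih (k + 1) S hS y
  have hlim : Tendsto (fun n => valJ Pr δ f U x + δ n * C) atTop (𝓝 (valJ Pr δ f U x)) := by
    simpa using (hδ_lim.mul_const C).const_add (valJ Pr δ f U x)
  exact ge_of_tendsto' hlim fun n => by simpa using key n 0 S hS x

/-- Upper semicontinuity of `f` and lower semicontinuity of the kernel make every stopping region
of the form `Θ(S)`, in particular every equilibrium, closed. -/
lemma isClosed_Θ [TopologicalSpace 𝕏] [PolishSpace 𝕏] [BorelSpace 𝕏] (h : IsMarkovChainLaw Pr Q)
    (hf : Measurable f) (hf0 : ∀ x, 0 ≤ f x) (hfC : ∀ x, f x ≤ C) (hδ : ∀ n, 0 ≤ δ n)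
    (hδd : ∀ n, δ n ≤ d) (hf_usc : UpperSemicontinuous f)
    (hQ_lsc : ∀ g : 𝕏 → ℝ, Measurable g → (∃ C : ℝ, ∀ y, |g y| ≤ C) →
      ∀ (x : 𝕏) (xs : ℕ → 𝕏), Tendsto xs atTop (𝓝 x) →
        ∫ y, g y ∂(Q x) ≤ Filter.liminf (fun n => ∫ y, g y ∂(Q (xs n))) atTop)
    (hS : MeasurableSet S) : IsClosed (Θ Pr δ f S) := by
  refine IsSeqClosed.isClosed fun xs x hxs hx => ?_
  change valJ Pr δ f S x ≤ f x
  by_contra! hlt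
  obtain ⟨c, hc1, hc2⟩ := exists_between hlt
  have hlim := hQ_lsc _ (measurable_nextValue hS hf)
    ⟨_, abs_nextValue_le (Pr := Pr) hS hf hf0 hfC hδ hδd⟩ x xs hx
  simp_rw [← valJ_eq_integral h hS hf hf0 hfC hδ hδd] at hlim
  have hbdd : IsBoundedUnder (· ≥ ·) atTop fun n => valJ Pr δ f S (xs n) :=
    isBoundedUnder_of ⟨0, fun n => valJ_nonneg hf0 hδ _⟩
  have h1 := eventually_lt_of_lt_liminf (hc2.trans_le hlim) hbdd
  have h2 := hx.eventually (hf_usc x c hc1)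
  obtain ⟨n, hn1, hn2⟩ := (h1.and h2).exists
  exact absurd (hxs n) (not_le.2 (hn2.trans hn1))

end Values

/-! ### The optimal equilibrium -/

/-- Under decreasing impatience, upper semicontinuity of `f` and lower
semicontinuity of the kernel `Q` under the weak star topology,
`S* = ⋂_{S ∈ ℰ} S` is the optimal equilibrium. -/
theorem optimal_equilibrium_exists_usc
    {𝕏 : Type*} [TopologicalSpace 𝕏] [PolishSpace 𝕏] [MeasurableSpace 𝕏] [BorelSpace 𝕏]
    (Pr : Kernel 𝕏 (ℕ → 𝕏)) [IsMarkovKernel Pr] (Q : Kernel 𝕏 𝕏) [IsMarkovKernel Q]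
    (hchain : IsMarkovChainLaw Pr Q)
    (f : 𝕏 → ℝ) (hf_meas : Measurable f) (hf_nonneg : ∀ x, 0 ≤ f x)
    (hf_bdd : ∃ C : ℝ, ∀ x, f x ≤ C)
    (δ : ℕ → ℝ) (hδ_mem : ∀ k, δ k ∈ Set.Icc (0 : ℝ) 1) (hδ_anti : StrictAnti δ)
    (hδ_zero : δ 0 = 1) (hδ_lim : Tendsto δ atTop (𝓝 0))
    (hDI : ∀ i j : ℕ, δ i * δ j ≤ δ (i + j))
    (hf_usc : UpperSemicontinuous f)
    (hQ_lsc : ∀ g : 𝕏 → ℝ, Measurable g → (∃ C : ℝ, ∀ y, |g y| ≤ C) →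
      ∀ (x : 𝕏) (xs : ℕ → 𝕏), Tendsto xs atTop (𝓝 x) →
        ∫ y, g y ∂(Q x) ≤ Filter.liminf (fun n => ∫ y, g y ∂(Q (xs n))) atTop)
 :
    IsEquilibrium Pr δ f (⋂₀ {S : Set 𝕏 | IsEquilibrium Pr δ f S}) ∧
    ∀ S : Set 𝕏, IsEquilibrium Pr δ f S → ∀ x : 𝕏,
      valV Pr δ f S x ≤ valV Pr δ f (⋂₀ {S : Set 𝕏 | IsEquilibrium Pr δ f S}) x := by
  obtain ⟨C, hfC⟩ := hf_bdd
  have hδ : ∀ n, 0 ≤ δ n := fun n => (hδ_mem n).1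
  have hδ1 : ∀ n, δ n ≤ 1 := fun n => (hδ_mem n).2
  have hcl : ∀ S, MeasurableSet S → IsClosed (Θ Pr δ f S) := fun S hS =>
    isClosed_Θ hchain hf_meas hf_nonneg hfC hδ hδ1 hf_usc hQ_lsc hS
  -- closed sets outside of which continuing is strictly better than stopping
  let 𝓢 : Set (Set 𝕏) := {S | IsClosed S ∧ Θ Pr δ f S ⊆ S}
  have h𝓢 : ∀ S ∈ 𝓢, MeasurableSet S := fun S hS => hS.1.measurableSet
  have hGcl : IsClosed (⋂₀ 𝓢) := isClosed_sInter fun S hS => hS.1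
  have hval : ∀ S ∈ 𝓢, ∀ x, valJ Pr δ f S x ≤ valJ Pr δ f (⋂₀ 𝓢) x := by
    intro S hS x
    refine valJ_le_of_refine hchain hf_meas hf_nonneg hfC hδ hδ_anti.antitone hδ_lim hDI h𝓢
      hGcl.measurableSet (fun S hS => Set.sInter_subset_of_mem hS) ?_ hS x
    intro S _ y _ hy
    rw [Set.mem_sInter] at hy
    push Not at hy
    obtain ⟨T, hT, hyT⟩ := hy
    exact ⟨T, hT, (not_le.1 fun hle => hyT (hT.2 hle)).le⟩
  have hG : ⋂₀ 𝓢 ∈ 𝓢 :=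
    ⟨hGcl, fun x hx => Set.mem_sInter.2 fun S hS => hS.2 ((hval S hS x).trans hx)⟩
  -- the minimal such set is not shrunk by `Θ`, since `Θ` preserves the family
  have hΘG : Θ Pr δ f (⋂₀ 𝓢) ∈ 𝓢 := by
    have hcl' := hcl _ (h𝓢 _ hG)
    refine ⟨hcl', fun x hx => (?_ : valJ Pr δ f _ x ≤ valJ Pr δ f _ x).trans hx⟩
    refine valJ_le_of_refine (𝓢 := {⋂₀ 𝓢}) hchain hf_meas hf_nonneg hfC hδ hδ_anti.antitone
      hδ_lim hDI ?_ hcl'.measurableSet ?_ ?_ rfl x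
    · rintro _ rfl
      exact h𝓢 _ hG
    · rintro _ rfl
      exact hG.2
    · rintro _ rfl y _ hy
      exact ⟨_, rfl, (not_le.1 hy).le⟩
  have hGeq : IsEquilibrium Pr δ f (⋂₀ 𝓢) :=
    ⟨h𝓢 _ hG, hG.2.antisymm (Set.sInter_subset_of_mem hΘG)⟩
  have hsub : ∀ S, IsEquilibrium Pr δ f S → S ∈ 𝓢 := fun S hS =>
    ⟨hS.2 ▸ hcl S hS.1, hS.2.subset⟩
  have hEq : ⋂₀ {S : Set 𝕏 | IsEquilibrium Pr δ f S} = ⋂₀ 𝓢 :=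
    (Set.sInter_subset_of_mem hGeq).antisymm (Set.sInter_subset_sInter hsub)
  rw [hEq]
  exact ⟨hGeq, fun S hS x => max_le_max le_rfl (hval S (hsub S hS) x)⟩

end
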